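/- arXiv:1601.05584 — 5 statements merged into one kernel-verified Lean document; each statement's English description precedes it below -/
import Mathlib

section
/- Under the regularization setup, suppose ρ, r, θ, γ > 0 and λ > 0 satisfy: (i) for every h ∈ F with Ψ(h − f*) ≤ ρ and ‖h − f*‖_{L²(μ)} ≥ r one has P_N Q_{h−f*} + 2 P_N M_{h−f*} ≥ (θ/2)‖h − f*‖²_{L²(μ)}; (ii) for every h ∈ F with Ψ(h − f*) ≤ ρ and ‖h − f*‖_{L²(μ)} ≤ r one has |P_N M_{h−f*}| ≤ γ; (iii) Δ(ρ) := inf{ sup_{z* ∈ Γ_{f*}(ρ)} z*(h − f*) : h ∈ F, Ψ(h − f*) = ρ, ‖h − f*‖_{L²(μ)} ≤ r } ≥ 4ρ/5; and (iv) 3γ/ρ ≤ λ < (θ/2)·r²/ρ. Then every f̂ ∈ F minimizing f ↦ (1/N)∑_{i=1}^N (y_i − f(x_i))² + λΨ(f) over F satisfies Ψ(f̂ − f*) ≤ ρ and ‖f̂ − f*‖_{L²(μ)} ≤ r. -/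
open MeasureTheory

/-- A linear functional of dual norm one is dominated by the norm. -/
theorem linearMap_le_of_sSup_unitBall_eq_one {E : Type*} [AddCommGroup E] [Module ℝ E]
    (Ψ : E → ℝ) (hΨ_nonneg : ∀ a, 0 ≤ Ψ a)
    (hΨ_smul : ∀ (c : ℝ) (a : E), Ψ (c • a) = |c| * Ψ a)
    (hΨ_eq : ∀ a, Ψ a = 0 ↔ a = 0) (z : E →ₗ[ℝ] ℝ)
    (hz : sSup {c | ∃ a, Ψ a ≤ 1 ∧ c = z a} = 1) (a : E) : z a ≤ Ψ a := by
  have hbdd : BddAbove {c | ∃ a, Ψ a ≤ 1 ∧ c = z a} := by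
    by_contra h
    rw [Real.sSup_of_not_bddAbove h] at hz
    exact zero_ne_one hz
  rcases (hΨ_nonneg a).eq_or_lt with h | h
  · simp [(hΨ_eq a).1 h.symm, (hΨ_eq 0).2 rfl]
  · have hle : z ((Ψ a)⁻¹ • a) ≤ 1 := by
      rw [← hz]
      refine le_csSup hbdd ⟨_, ?_, rfl⟩
      rw [hΨ_smul, abs_of_pos (inv_pos.2 h), inv_mul_cancel₀ h.ne']
    rwa [map_smul, smul_eq_mul, inv_mul_le_iff₀ h, mul_one] at hle

/-- If `z` is dominated by the norm `Ψ` and norming at a point `ε`-close to `f`, then it is a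
`2ε`-subgradient of `Ψ` at `f`. -/
theorem approx_subgradient_of_norming {E : Type*} [AddCommGroup E] [Module ℝ E]
    (Ψ : E → ℝ) (hΨ_add : ∀ a b, Ψ (a + b) ≤ Ψ a + Ψ b)
    (hΨ_smul : ∀ (c : ℝ) (a : E), Ψ (c • a) = |c| * Ψ a)
    (z : E →ₗ[ℝ] ℝ) (hz : ∀ a, z a ≤ Ψ a) {f v : E} {ε : ℝ}
    (hv : Ψ (v - f) ≤ ε) (hzv : z v = Ψ v) (g : E) :
    z (g - f) - 2 * ε ≤ Ψ g - Ψ f := by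
  have hg := hz g
  have hvf := hz (v - f)
  have hsymm : Ψ (f - v) = Ψ (v - f) := by
    simpa using hΨ_smul (-1) (v - f)
  have hf := hΨ_add v (f - v)
  rw [add_sub_cancel] at hf
  rw [map_sub] at hvf ⊢
  linarith

/-- The empirical excess squared loss is the quadratic term plus twice the multiplier term. -/
theorem empirical_excess_loss_eq {Ω E : Type*} [AddCommGroup E] [Module ℝ E]
    (j : E →ₗ[ℝ] (Ω → ℝ)) (N : ℕ) (x : Fin N → Ω) (y : Fin N → ℝ) (f g : E) :
    (1 / (N : ℝ)) * ∑ i, (y i - j g (x i)) ^ 2 =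
      (1 / (N : ℝ)) * ∑ i, (y i - j f (x i)) ^ 2 +
        ((1 / (N : ℝ)) * ∑ i, (j (g - f) (x i)) ^ 2 +
          2 * ((1 / (N : ℝ)) * ∑ i, (j f (x i) - y i) * j (g - f) (x i))) := by
  have hsum : ∑ i, (y i - j g (x i)) ^ 2 = ∑ i, (y i - j f (x i)) ^ 2 +
      (∑ i, (j (g - f) (x i)) ^ 2 + 2 * ∑ i, (j f (x i) - y i) * j (g - f) (x i)) := by
    rw [Finset.mul_sum, ← Finset.sum_add_distrib, ← Finset.sum_add_distrib]
    refine Finset.sum_congr rfl fun i _ => ?_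
    simp only [map_sub, Pi.sub_apply]
    ring
  rw [hsum]
  ring

/-- The regularized empirical squared loss is convex. -/
theorem convexOn_regularized_empirical_loss {Ω E : Type*} [AddCommGroup E] [Module ℝ E]
    (j : E →ₗ[ℝ] (Ω → ℝ)) (Ψ : E → ℝ) (hΨ_add : ∀ a b, Ψ (a + b) ≤ Ψ a + Ψ b)
    (hΨ_smul : ∀ (c : ℝ) (a : E), Ψ (c • a) = |c| * Ψ a)
    (N : ℕ) (x : Fin N → Ω) (y : Fin N → ℝ) {lam : ℝ} (hlam : 0 ≤ lam) :
    ConvexOn ℝ Set.univ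
      fun f => (1 / (N : ℝ)) * ∑ i, (y i - j f (x i)) ^ 2 + lam * Ψ f := by
  refine ⟨convex_univ, fun f _ g _ a b ha hb hab => ?_⟩
  have hΨ : Ψ (a • f + b • g) ≤ a * Ψ f + b * Ψ g := by
    simpa [hΨ_smul, abs_of_nonneg ha, abs_of_nonneg hb] using hΨ_add (a • f) (b • g)
  have hsum : ∑ i, (y i - j (a • f + b • g) (x i)) ^ 2 ≤
      a * ∑ i, (y i - j f (x i)) ^ 2 + b * ∑ i, (y i - j g (x i)) ^ 2 := by
    rw [Finset.mul_sum, Finset.mul_sum, ← Finset.sum_add_distrib]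
    refine Finset.sum_le_sum fun i _ => ?_
    simp only [map_add, map_smul, Pi.add_apply, Pi.smul_apply, smul_eq_mul]
    obtain rfl : b = 1 - a := by linarith
    nlinarith [mul_nonneg (mul_nonneg ha hb) (sq_nonneg (j f (x i) - j g (x i)))]
  have hN : (0 : ℝ) ≤ 1 / N := by positivity
  simp only [smul_eq_mul]
  nlinarith [mul_le_mul_of_nonneg_left hsum hN, mul_le_mul_of_nonneg_left hΨ hlam]

/-- the main theorem (Theorem 3.1 / `lemma:basic-combining-loss-and-reg`):
under the deterministic events (i) quadratic-plus-multiplier lower bound outside the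
`L²` ball of radius `r`, (ii) control of the multiplier process inside it,
(iii) the sparsity condition `Δ(ρ) ≥ 4ρ/5`, and (iv) the choice of the regularization
parameter `3γ/ρ ≤ λ < (θ/2) r²/ρ`, any regularized empirical minimizer `f̂` satisfies
`Ψ(f̂ - f*) ≤ ρ` and `‖f̂ - f*‖_{L²(μ)} ≤ r`. -/
theorem stmt0
    {Ω : Type*} [MeasurableSpace Ω] (ν : Measure (Ω × ℝ)) [IsProbabilityMeasure ν]
    {E : Type*} [AddCommGroup E] [Module ℝ E]
    -- `E` is realized as a linear subspace of functions on `Ω` via the injection `j`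
    (j : E →ₗ[ℝ] (Ω → ℝ)) (hj : Function.Injective j)
    -- `Ψ` is a norm on `E`
    (Ψ : E → ℝ)
    (hΨ_nonneg : ∀ a, 0 ≤ Ψ a)
    (hΨ_add : ∀ a b, Ψ (a + b) ≤ Ψ a + Ψ b)
    (hΨ_smul : ∀ (c : ℝ) (a : E), Ψ (c • a) = |c| * Ψ a)
    (hΨ_eq : ∀ a, Ψ a = 0 ↔ a = 0)
    -- `F` is convex, `f* ∈ F`
    (F : Set E) (hFconv : Convex ℝ F)
    (fstar : E) (hfstarF : fstar ∈ F)
    -- members of `F` are square integrable (i.e. `E ⊆ L²(μ)` where relevant)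
    (hsq : ∀ f ∈ F, Integrable (fun p => (j f p.1) ^ 2) ν)
    -- the `L²(μ)` norm, `μ` being the first marginal of the joint law `ν` of `(X,Y)`
    (l2 : E → ℝ) (hl2 : ∀ h, l2 h = Real.sqrt (∫ p, (j h p.1) ^ 2 ∂ν))
    -- the variational inequality satisfied by the `L²` minimizer over the convex class:
    -- `ξ·(f-f*)(X)` is integrable and `𝔼[ξ·(f-f*)(X)] ≥ 0` where `ξ = f*(X) - Y`
    (hvar : ∀ f ∈ F, Integrable (fun p => (j fstar p.1 - p.2) * j (f - fstar) p.1) ν ∧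
      0 ≤ ∫ p, (j fstar p.1 - p.2) * j (f - fstar) p.1 ∂ν)
    -- the sample
    (N : ℕ) (hN : 0 < N) (x : Fin N → Ω) (y : Fin N → ℝ)
    (ρ r θ γ lam : ℝ) (hρ : 0 < ρ) (hr : 0 < r) (hθ : 0 < θ) (hγ : 0 < γ)
    -- (i) : `P_N Q_{h-f*} + 2 P_N M_{h-f*} ≥ (θ/2)‖h-f*‖²` on the `Ψ`-ball, outside the `L²`-ball
    (hi : ∀ h ∈ F, Ψ (h - fstar) ≤ ρ → r ≤ l2 (h - fstar) →
      θ / 2 * l2 (h - fstar) ^ 2 ≤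
        (1 / (N : ℝ)) * ∑ i, (j (h - fstar) (x i)) ^ 2 +
        2 * ((1 / (N : ℝ)) * ∑ i, (j fstar (x i) - y i) * j (h - fstar) (x i) -
          ∫ p, (j fstar p.1 - p.2) * j (h - fstar) p.1 ∂ν))
    -- (ii) : `|P_N M_{h-f*}| ≤ γ` on the intersection of the two balls
    (hii : ∀ h ∈ F, Ψ (h - fstar) ≤ ρ → l2 (h - fstar) ≤ r →
      |(1 / (N : ℝ)) * ∑ i, (j fstar (x i) - y i) * j (h - fstar) (x i) -
        ∫ p, (j fstar p.1 - p.2) * j (h - fstar) p.1 ∂ν| ≤ γ)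
    -- (iii) : the sparsity condition `Δ(ρ) ≥ 4ρ/5`, where the supremum runs over the
    -- collection `Γ_{f*}(ρ)` of functionals of dual norm one that are norming for some
    -- point of the `Ψ`-ball of radius `ρ/20` around `f*`
    (hiii : ∀ h ∈ F, Ψ (h - fstar) = ρ → l2 (h - fstar) ≤ r →
      4 * ρ / 5 ≤ sSup {c | ∃ z : E →ₗ[ℝ] ℝ,
        (sSup {c' | ∃ a, Ψ a ≤ 1 ∧ c' = z a} = 1 ∧
          ∃ v, Ψ (v - fstar) ≤ ρ / 20 ∧ z v = Ψ v) ∧ c = z (h - fstar)})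
    -- (iv) : the choice of the regularization parameter
    (hlam1 : 3 * γ / ρ ≤ lam) (hlam2 : lam < θ / 2 * r ^ 2 / ρ)
    -- `f̂` is a regularized empirical minimizer
    (fhat : E) (hfhatF : fhat ∈ F)
    (hmin : ∀ f ∈ F,
      (1 / (N : ℝ)) * ∑ i, (y i - j fhat (x i)) ^ 2 + lam * Ψ fhat ≤
      (1 / (N : ℝ)) * ∑ i, (y i - j f (x i)) ^ 2 + lam * Ψ f) :
    Ψ (fhat - fstar) ≤ ρ ∧ l2 (fhat - fstar) ≤ r := by
  have hlam : 0 < lam := lt_of_lt_of_le (by positivity) hlam1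
  have hγlam : 3 * γ ≤ lam * ρ := (div_le_iff₀ hρ).1 hlam1
  have hlamr : lam * ρ < θ / 2 * r ^ 2 := (lt_div_iff₀ hρ).1 hlam2
  -- outside the `L²` ball the regularized excess loss is positive
  have hfar : ∀ f ∈ F, Ψ (f - fstar) ≤ ρ → r ≤ l2 (f - fstar) →
      (1 / (N : ℝ)) * ∑ i, (y i - j fstar (x i)) ^ 2 + lam * Ψ fstar <
      (1 / (N : ℝ)) * ∑ i, (y i - j f (x i)) ^ 2 + lam * Ψ f := by
    intro f hf hfρ hfr
    have hlow := hi f hf hfρ hfr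
    have hexp := (hvar f hf).2
    have htri : Ψ fstar ≤ Ψ f + Ψ (f - fstar) := by
      have hsymm : Ψ (fstar - f) = Ψ (f - fstar) := by
        simpa using hΨ_smul (-1) (f - fstar)
      simpa [hsymm] using hΨ_add f (fstar - f)
    have hsq_le : θ / 2 * r ^ 2 ≤ θ / 2 * l2 (f - fstar) ^ 2 := by gcongr
    have hreg : lam * Ψ fstar ≤ lam * (Ψ f + ρ) :=
      mul_le_mul_of_nonneg_left (by linarith) hlam.le
    rw [empirical_excess_loss_eq j N x y fstar f]
    linarith
  -- on the `Ψ` sphere inside the `L²` ball the regularization term dominates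
  have hsphere : ∀ f ∈ F, Ψ (f - fstar) = ρ → l2 (f - fstar) ≤ r →
      (1 / (N : ℝ)) * ∑ i, (y i - j fstar (x i)) ^ 2 + lam * Ψ fstar <
      (1 / (N : ℝ)) * ∑ i, (y i - j f (x i)) ^ 2 + lam * Ψ f := by
    intro f hf hfρ hfr
    have hmult := (abs_le.1 (hii f hf hfρ.le hfr)).1
    have hexp := (hvar f hf).2
    have hquad : 0 ≤ (1 / (N : ℝ)) * ∑ i, (j (f - fstar) (x i)) ^ 2 := by positivity
    have hΔ := hiii f hf hfρ hfr
    have hlt := lt_of_lt_of_le (show 79 / 100 * ρ < 4 * ρ / 5 by linarith) hΔ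
    obtain ⟨c, ⟨z, ⟨hz, v, hv, hzv⟩, rfl⟩, hc⟩ := exists_lt_of_lt_csSup
      (Set.nonempty_iff_ne_empty.2 fun h => by
        rw [h, Real.sSup_empty] at hΔ
        linarith) hlt
    have hsub := approx_subgradient_of_norming Ψ hΨ_add hΨ_smul z
      (linearMap_le_of_sSup_unitBall_eq_one Ψ hΨ_nonneg hΨ_smul hΨ_eq z hz) hv hzv f
    have hreg : lam * (69 / 100 * ρ) ≤ lam * (Ψ f - Ψ fstar) :=
      mul_le_mul_of_nonneg_left (by linarith) hlam.le
    rw [empirical_excess_loss_eq j N x y fstar f]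
    linarith
  have hball : Ψ (fhat - fstar) ≤ ρ := by
    by_contra! hgt
    have hpos : 0 < Ψ (fhat - fstar) := hρ.trans hgt
    set α := ρ / Ψ (fhat - fstar) with hα
    have hα0 : 0 < α := div_pos hρ hpos
    have hα1 : 0 ≤ 1 - α := sub_nonneg.2 ((div_le_one hpos).2 hgt.le)
    have hmem : (1 - α) • fstar + α • fhat ∈ F :=
      hFconv hfstarF hfhatF hα1 hα0.le (by ring)
    have hdiff : (1 - α) • fstar + α • fhat - fstar = α • (fhat - fstar) := by module
    have hnorm : Ψ ((1 - α) • fstar + α • fhat - fstar) = ρ := by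
      rw [hdiff, hΨ_smul, abs_of_pos hα0, hα, div_mul_cancel₀ _ hpos.ne']
    have hconv := (convexOn_regularized_empirical_loss j Ψ hΨ_add hΨ_smul N x y hlam.le).2
      (Set.mem_univ fstar) (Set.mem_univ fhat) hα1 hα0.le (by ring)
    simp only [smul_eq_mul] at hconv
    have hle := mul_le_mul_of_nonneg_left (hmin fstar hfstarF) hα0.le
    rcases le_total r (l2 ((1 - α) • fstar + α • fhat - fstar)) with h | h
    · linarith [hfar _ hmem hnorm.le h]
    · linarith [hsphere _ hmem hnorm h]
  refine ⟨hball, ?_⟩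
  by_contra! hgt
  exact (hfar fhat hfhatF hball hgt.le).not_ge (hmin fstar hfstarF)
end

section
/- Let t* ∈ ℝ^d, ρ > 0, r > 0, and suppose t* = v + u where ‖u‖₁ ≤ ρ/20 and v is supported on at most s coordinates with 100·s ≤ (ρ/r)². Then for every w ∈ ℝ^d with ‖w‖₁ = ρ and ‖w‖₂ ≤ r there exists z ∈ Γ_{t*}(ρ) with ⟨z, w⟩ ≥ 4ρ/5; that is, Δ(ρ) := inf{ sup_{z ∈ Γ_{t*}(ρ)} ⟨z, w⟩ : ‖w‖₁ = ρ, ‖w‖₂ ≤ r } ≥ 4ρ/5. -/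
/-- The `ℓ₁` norm on `ℝ^d`. -/
noncomputable def l1norm {d : ℕ} (t : Fin d → ℝ) : ℝ := ∑ i, |t i|

/-- The Euclidean (`ℓ₂`) norm on `ℝ^d`. -/
noncomputable def l2norm {d : ℕ} (t : Fin d → ℝ) : ℝ := Real.sqrt (∑ i, (t i) ^ 2)

/-- The `ℓ_∞` norm on `ℝ^d` (the dual norm of `ℓ₁`). -/
noncomputable def linfNorm {d : ℕ} (t : Fin d → ℝ) : ℝ := ⨆ i, |t i|

/-- The standard inner product on `ℝ^d`. -/
noncomputable def iprod {d : ℕ} (x y : Fin d → ℝ) : ℝ := ∑ i, x i * y i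

/-- A sign of `x` valued in `{-1, 1}`, with value `1` at `0`. -/
noncomputable def pmSign (x : ℝ) : ℝ := if x < 0 then -1 else 1

lemma abs_pmSign (x : ℝ) : |pmSign x| = 1 := by
  unfold pmSign
  split_ifs <;> simp

lemma pmSign_mul_self (x : ℝ) : pmSign x * x = |x| := by
  unfold pmSign
  split_ifs with h
  · rw [abs_of_neg h]; ring
  · rw [abs_of_nonneg (not_lt.mp h)]; ring

/-- By Cauchy–Schwarz, a vector of Euclidean norm at most `r` has `ℓ₁` mass at most `ρ / 10` on
any set of at most `s` coordinates, provided `100 * s ≤ (ρ / r) ^ 2`. -/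
lemma sum_abs_le_of_card_le {d s : ℕ} {ρ r : ℝ} (hρ : 0 < ρ) (hr : 0 < r)
    (hs : 100 * (s : ℝ) ≤ (ρ / r) ^ 2) {w : Fin d → ℝ} (hw : l2norm w ≤ r)
    {J : Finset (Fin d)} (hJ : J.card ≤ s) : ∑ i ∈ J, |w i| ≤ ρ / 10 := by
  have hcs : (∑ i ∈ J, |w i|) ^ 2 ≤ J.card * ∑ i ∈ J, |w i| ^ 2 := sq_sum_le_card_mul_sum_sq
  have hsq : ∑ i ∈ J, |w i| ^ 2 ≤ r ^ 2 := by
    simp only [sq_abs]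
    exact (Finset.sum_le_univ_sum_of_nonneg fun i => sq_nonneg (w i)).trans
      ((Real.sqrt_le_left hr.le).mp hw)
  have hcard : (J.card : ℝ) ≤ s := by exact_mod_cast hJ
  have hmul : (J.card : ℝ) * ∑ i ∈ J, |w i| ^ 2 ≤ s * r ^ 2 :=
    mul_le_mul hcard hsq (Finset.sum_nonneg fun i _ => sq_nonneg _) (Nat.cast_nonneg s)
  rw [div_pow, le_div_iff₀ (by positivity)] at hs
  refine le_of_abs_le (abs_le_of_sq_le_sq ?_ (by positivity))
  linarith [div_pow ρ 10 2]

/-- Lemma 4.2, the LASSO sparsity equation: if `t* = v + u` with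
`‖u‖₁ ≤ ρ/20`, `v` supported on at most `s` coordinates and `100 s ≤ (ρ/r)²`, then for
every `w` with `‖w‖₁ = ρ` and `‖w‖₂ ≤ r` there is `z ∈ Γ_{t*}(ρ)` (i.e. `‖z‖_∞ = 1` and
`z` is norming for some point of the `ℓ₁`-ball of radius `ρ/20` around `t*`) with
`⟨z, w⟩ ≥ 4ρ/5`; that is, `Δ(ρ) ≥ 4ρ/5`. -/
theorem stmt2 (d s : ℕ) (tstar v u : Fin d → ℝ) (ρ r : ℝ) (hρ : 0 < ρ) (hr : 0 < r)
    (hdec : tstar = v + u) (hu : l1norm u ≤ ρ / 20)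
    (hsupp : ∃ J : Finset (Fin d), J.card ≤ s ∧ ∀ i ∉ J, v i = 0)
    (hs : 100 * (s : ℝ) ≤ (ρ / r) ^ 2) :
    ∀ w : Fin d → ℝ, l1norm w = ρ → l2norm w ≤ r →
      ∃ z : Fin d → ℝ,
        (linfNorm z = 1 ∧
          ∃ v' : Fin d → ℝ, l1norm (v' - tstar) ≤ ρ / 20 ∧ iprod z v' = l1norm v') ∧
        4 * ρ / 5 ≤ iprod z w := by
  intro w hw1 hw2
  obtain ⟨J, hJcard, hJ⟩ := hsupp
  have hmass := sum_abs_le_of_card_le hρ hr hs hw2 hJcard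
  let z : Fin d → ℝ := fun i => if i ∈ J then pmSign (v i) else pmSign (w i)
  have hz : ∀ i, |z i| = 1 := fun i => by
    simp only [z]
    split_ifs <;> exact abs_pmSign _
  have hne : Nonempty (Fin d) := by
    by_contra h
    rw [not_nonempty_iff] at h
    simp [l1norm] at hw1
    linarith
  refine ⟨z, ⟨by simp [linfNorm, hz], v, ?_, ?_⟩, ?_⟩
  · simpa [l1norm, hdec] using hu
  · refine Finset.sum_congr rfl fun i _ => ?_
    by_cases h : i ∈ J
    · simpa [z, h] using pmSign_mul_self (v i)
    · simp [hJ i h]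
  · have hlow : ∀ i, |w i| - (if i ∈ J then 2 * |w i| else 0) ≤ z i * w i := fun i => by
      by_cases h : i ∈ J
      · have := neg_abs_le (z i * w i)
        rw [abs_mul, hz] at this
        simp only [h, if_true]
        linarith
      · simp [z, h, pmSign_mul_self]
    have hsum := Finset.sum_le_sum fun i (_ : i ∈ Finset.univ) => hlow i
    rw [Finset.sum_sub_distrib, Finset.sum_ite_mem, Finset.univ_inter, ← Finset.mul_sum] at hsum
    unfold l1norm at hw1
    unfold iprod
    linarith
end

section
/- Let Ψ be the SLOPE norm with weights β₁ ≥ β₂ ≥ … ≥ β_d > 0, let 1 ≤ s ≤ d and set B_s = ∑_{i ≤ s} β_i/√i. Let t* ∈ ℝ^d, ρ > 0, r > 0, and suppose t* = v + u where Ψ(u) ≤ ρ/20, v is supported on at most s coordinates, and 40·B_s ≤ ρ/r. Then for every w ∈ ℝ^d with Ψ(w) = ρ and ‖w‖₂ ≤ r there exists z ∈ Γ_{t*}(ρ) with ⟨z, w⟩ ≥ 4ρ/5; that is, Δ(ρ) := inf{ sup_{z ∈ Γ_{t*}(ρ)} ⟨z, w⟩ : Ψ(w) = ρ, ‖w‖₂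 ≤ r } ≥ 4ρ/5. -/
/-- The nonincreasing rearrangement of `(|t_i|)_{i=1}^d`. -/
noncomputable def sharpOrd {d : ℕ} (t : Fin d → ℝ) : Fin d → ℝ :=
  fun i => |t (Tuple.sort (fun j => |t j|) i.rev)|

/-- The SLOPE norm `Ψ(t) = ∑ β_i t_i^♯` associated with weights `β`. -/
noncomputable def slopeNorm {d : ℕ} (β t : Fin d → ℝ) : ℝ := ∑ i, β i * sharpOrd t i

/-- The dual norm of the SLOPE norm. -/
noncomputable def slopeDualNorm {d : ℕ} (β z : Fin d → ℝ) : ℝ :=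
  sSup {c | ∃ w : Fin d → ℝ, slopeNorm β w ≤ 1 ∧ c = iprod z w}

/-- The permutation of the indices which realises `sharpOrd`. -/
noncomputable def sharpPerm {d : ℕ} (t : Fin d → ℝ) : Equiv.Perm (Fin d) :=
  Fin.revPerm.trans (Tuple.sort fun j => |t j|)

theorem sharpOrd_eq_abs_sharpPerm {d : ℕ} (t : Fin d → ℝ) (i : Fin d) :
    sharpOrd t i = |t (sharpPerm t i)| := rfl

theorem sharpOrd_antitone {d : ℕ} (t : Fin d → ℝ) : Antitone (sharpOrd t) := fun _ _ hij =>
  Tuple.monotone_sort (fun j => |t j|) (Fin.rev_le_rev.2 hij)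

theorem sum_mul_comp_perm_le {d : ℕ} {β a : Fin d → ℝ} (hβ : Antitone β) (ha : Antitone a)
    (τ : Equiv.Perm (Fin d)) : ∑ i, β i * a (τ i) ≤ ∑ i, β i * a i :=
  (hβ.monovary ha).sum_mul_comp_perm_le_sum_mul

/-- Among all rearrangements of `|t|`, the nonincreasing one has the largest weighted sum. -/
theorem sum_mul_abs_perm_le_sharpOrd {d : ℕ} {β : Fin d → ℝ} (hβ : Antitone β) (t : Fin d → ℝ)
    (π : Equiv.Perm (Fin d)) : ∑ i, β i * |t (π i)| ≤ ∑ i, β i * sharpOrd t i := by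
  simpa [sharpOrd_eq_abs_sharpPerm] using
    sum_mul_comp_perm_le hβ (sharpOrd_antitone t) (π.trans (sharpPerm t).symm)

theorem slopeNorm_eq_of_antitone {d : ℕ} {β : Fin d → ℝ} (hβ : Antitone β) (t : Fin d → ℝ)
    (π : Equiv.Perm (Fin d)) (h : Antitone fun i => |t (π i)|) :
    slopeNorm β t = ∑ i, β i * |t (π i)| := by
  refine le_antisymm ?_ (sum_mul_abs_perm_le_sharpOrd hβ t π)
  simpa [slopeNorm, sharpOrd_eq_abs_sharpPerm] using
    sum_mul_comp_perm_le hβ h ((sharpPerm t).trans π.symm)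

theorem slopeNorm_neg {d : ℕ} {β : Fin d → ℝ} (hβ : Antitone β) (t : Fin d → ℝ) :
    slopeNorm β (-t) = slopeNorm β t := by
  rw [slopeNorm_eq_of_antitone hβ (-t) (sharpPerm t)]
  · simp [slopeNorm, sharpOrd_eq_abs_sharpPerm]
  · simp only [Pi.neg_apply, abs_neg]
    exact sharpOrd_antitone t

theorem sharpOrd_le_div_sqrt {d : ℕ} (w : Fin d → ℝ) (i : Fin d) :
    sharpOrd w i ≤ l2norm w / √((i : ℕ) + 1) := by
  have hpos : (0 : ℝ) < (i : ℕ) + 1 := by positivity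
  have h0 : 0 ≤ sharpOrd w i := abs_nonneg _
  rw [le_div_iff₀ (Real.sqrt_pos.2 hpos)]
  apply Real.le_sqrt_of_sq_le
  rw [mul_pow, Real.sq_sqrt hpos.le]
  calc sharpOrd w i ^ 2 * ((i : ℕ) + 1) = ∑ _m ∈ Finset.Iic i, sharpOrd w i ^ 2 := by
        simp [Fin.card_Iic, mul_comm]
    _ ≤ ∑ m ∈ Finset.Iic i, sharpOrd w m ^ 2 := Finset.sum_le_sum fun m hm =>
        pow_le_pow_left₀ h0 (sharpOrd_antitone w (Finset.mem_Iic.1 hm)) 2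
    _ ≤ ∑ m, sharpOrd w m ^ 2 := Finset.sum_le_sum_of_subset_of_nonneg
        (Finset.subset_univ _) fun _ _ _ => sq_nonneg _
    _ = ∑ j, w j ^ 2 := by
        simpa [sharpOrd_eq_abs_sharpPerm] using Equiv.sum_comp (sharpPerm w) fun j => w j ^ 2

/-- If `|w ∘ π|` is bounded by its value at `i` from `i` on, that value dominates the `i`-th
entry of the nonincreasing rearrangement. -/
theorem sharpOrd_le_of_tail_le {d : ℕ} (w : Fin d → ℝ) (π : Equiv.Perm (Fin d)) (i : Fin d)
    (h : ∀ m, i ≤ m → |w (π m)| ≤ |w (π i)|) : sharpOrd w i ≤ |w (π i)| := by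
  by_contra! hlt
  have hsub : (Finset.Iic i).map (sharpPerm w).toEmbedding ⊆
      (Finset.Iio i).map π.toEmbedding := by
    intro j hj
    obtain ⟨m, hm, rfl⟩ := Finset.mem_map.1 hj
    refine Finset.mem_map.2 ⟨π.symm (sharpPerm w m), ?_, by simp⟩
    rw [Finset.mem_Iio]
    by_contra! hle
    have h1 := h _ hle
    have h2 := sharpOrd_antitone w (Finset.mem_Iic.1 hm)
    rw [sharpOrd_eq_abs_sharpPerm w m] at h2
    rw [Equiv.apply_symm_apply] at h1
    linarith
  have := Finset.card_le_card hsub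
  simp [Fin.card_Iic, Fin.card_Iio] at this

theorem apply_perm_eq_zero_of_card_le {d : ℕ} (v : Fin d → ℝ) (J : Finset (Fin d))
    (hJ : ∀ i ∉ J, v i = 0) (π : Equiv.Perm (Fin d)) (hπ : Antitone fun i => |v (π i)|)
    (i : Fin d) (hi : J.card ≤ i) : v (π i) = 0 := by
  by_contra hne
  have hsub : (Finset.Iic i).map π.toEmbedding ⊆ J := by
    intro j hj
    obtain ⟨m, hm, rfl⟩ := Finset.mem_map.1 hj
    by_contra hmJ
    have h1 : |v (π i)| ≤ |v (π m)| := hπ (Finset.mem_Iic.1 hm)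
    rw [show v (π m) = 0 from hJ _ hmJ, abs_zero] at h1
    exact absurd h1 (not_le.2 (abs_pos.2 hne))
  have := Finset.card_le_card hsub
  simp [Fin.card_Iic] at this
  omega

/-- A permutation sorting `|v|` in nonincreasing order, with ties broken by `|w|`. -/
theorem exists_perm_antitone_lex {d : ℕ} (v w : Fin d → ℝ) :
    ∃ π : Equiv.Perm (Fin d), (Antitone fun i => |v (π i)|) ∧
      ∀ i m, i ≤ m → v (π i) = 0 → |w (π m)| ≤ |w (π i)| := by
  let key : Fin d → ℝ ×ₗ ℝ := fun j => toLex (|v j|, |w j|)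
  let π : Equiv.Perm (Fin d) := Fin.revPerm.trans (Tuple.sort key)
  have hkey : ∀ i m, i ≤ m → |v (π m)| < |v (π i)| ∨
      |v (π m)| = |v (π i)| ∧ |w (π m)| ≤ |w (π i)| := fun i m him =>
    (Prod.Lex.toLex_le_toLex).1 (Tuple.monotone_sort key (Fin.rev_le_rev.2 him))
  refine ⟨π, fun i m him => ?_, fun i m him h0 => ?_⟩
  · rcases hkey i m him with h | h
    exacts [h.le, h.1.le]
  · rcases hkey i m him with h | h
    · rw [h0, abs_zero] at h
      exact absurd h (not_lt.2 (abs_nonneg _))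
    · exact h.2

theorem exists_sign {d : ℕ} (t : Fin d → ℝ) :
    ∃ e : Fin d → ℝ, (∀ j, |e j| = 1) ∧ ∀ j, e j * t j = |t j| := by
  refine ⟨fun j => if 0 ≤ t j then 1 else -1, fun j => ?_, fun j => ?_⟩ <;>
    by_cases h : 0 ≤ t j <;> simp [h, abs_of_nonneg, abs_of_neg, not_le.1]

theorem iprod_signed_perm {d : ℕ} (β e t : Fin d → ℝ) (π : Equiv.Perm (Fin d)) :
    iprod (fun j => β (π.symm j) * e j) t = ∑ i, β i * (e (π i) * t (π i)) := by
  rw [iprod, ← Equiv.sum_comp π]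
  simp [mul_assoc]

theorem slopeDualNorm_signed_perm {d : ℕ} (hd : 0 < d) {β : Fin d → ℝ} (hβ : Antitone β)
    (hβpos : ∀ i, 0 < β i) (e : Fin d → ℝ) (he : ∀ j, |e j| = 1) (π : Equiv.Perm (Fin d)) :
    slopeDualNorm β (fun j => β (π.symm j) * e j) = 1 := by
  have hS : 0 < ∑ i, β i :=
    Finset.sum_pos (fun i _ => hβpos i) ⟨⟨0, hd⟩, Finset.mem_univ _⟩
  have hsq : ∀ j, e j * e j = 1 := fun j => by rw [← abs_mul_abs_self, he, one_mul]
  refine IsGreatest.csSup_eq ⟨⟨fun j => e j * (∑ i, β i)⁻¹, ?_, ?_⟩, ?_⟩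
  · refine le_of_eq ?_
    simp only [slopeNorm, sharpOrd, abs_mul, he, one_mul, abs_of_pos (inv_pos.2 hS)]
    rw [← Finset.sum_mul, mul_inv_cancel₀ hS.ne']
  · rw [iprod_signed_perm]
    simp only [← mul_assoc (e _), hsq, one_mul]
    rw [← Finset.sum_mul, mul_inv_cancel₀ hS.ne']
  · rintro c ⟨w, hw, rfl⟩
    rw [iprod_signed_perm]
    refine (Finset.sum_le_sum fun i _ => ?_).trans
      ((sum_mul_abs_perm_le_sharpOrd hβ w π).trans hw)
    refine mul_le_mul_of_nonneg_left ((le_abs_self _).trans_eq ?_) (hβpos i).le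
    rw [abs_mul, he, one_mul]

/-- The partial weighted sum over the first `s` indices is also maximised by the nonincreasing
rearrangement. -/
theorem sum_filter_mul_abs_perm_le {d : ℕ} {β : Fin d → ℝ} (hβ : Antitone β)
    (hβpos : ∀ i, 0 < β i) (s : ℕ) (w : Fin d → ℝ) (π : Equiv.Perm (Fin d)) :
    ∑ i ∈ Finset.univ.filter (fun i : Fin d => (i : ℕ) < s), β i * |w (π i)| ≤
      ∑ i ∈ Finset.univ.filter (fun i : Fin d => (i : ℕ) < s), β i * sharpOrd w i := by
  have hβ' : Antitone fun i : Fin d => if (i : ℕ) < s then β i else 0 := by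
    intro i m him
    have him' : (i : ℕ) ≤ m := him
    dsimp only
    split_ifs with h1 h2 h2
    · exact hβ him
    · omega
    · exact (hβpos _).le
    · exact le_rfl
  simpa [Finset.sum_filter, ite_mul] using sum_mul_abs_perm_le_sharpOrd hβ' w π

/-- Lemma 4.3, the SLOPE sparsity equation: with nonincreasing positive
weights `β`, `B_s = ∑_{i ≤ s} β_i/√i`, if `t* = v + u` with `Ψ(u) ≤ ρ/20`, `v` supported
on at most `s` coordinates, and `40 B_s ≤ ρ/r`, then for every `w` with `Ψ(w) = ρ` and
`‖w‖₂ ≤ r` there exists `z ∈ Γ_{t*}(ρ)` with `⟨z, w⟩ ≥ 4ρ/5`; that is, `Δ(ρ) ≥ 4ρ/5`. -/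
theorem stmt3 (d s : ℕ) (hs1 : 1 ≤ s) (hsd : s ≤ d)
    (β : Fin d → ℝ) (hβmono : Antitone β) (hβpos : ∀ i, 0 < β i)
    (Bs : ℝ)
    (hBs : Bs = ∑ i ∈ Finset.univ.filter (fun i : Fin d => (i : ℕ) < s),
      β i / Real.sqrt ((i : ℕ) + 1))
    (tstar v u : Fin d → ℝ) (ρ r : ℝ) (hρ : 0 < ρ) (hr : 0 < r)
    (hdec : tstar = v + u) (hu : slopeNorm β u ≤ ρ / 20)
    (hsupp : ∃ J : Finset (Fin d), J.card ≤ s ∧ ∀ i ∉ J, v i = 0)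
    (hratio : 40 * Bs ≤ ρ / r) :
    ∀ w : Fin d → ℝ, slopeNorm β w = ρ → l2norm w ≤ r →
      ∃ z : Fin d → ℝ,
        (slopeDualNorm β z = 1 ∧
          ∃ v' : Fin d → ℝ, slopeNorm β (v' - tstar) ≤ ρ / 20 ∧
            iprod z v' = slopeNorm β v') ∧
        4 * ρ / 5 ≤ iprod z w := by
  intro w hw hwr
  obtain ⟨J, hJs, hJ⟩ := hsupp
  obtain ⟨π, hπv, hπw⟩ := exists_perm_antitone_lex v w
  obtain ⟨e, he1, he⟩ := exists_sign fun j => if v j = 0 then w j else v j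
  have hev : ∀ j, e j * v j = |v j| := fun j => by
    by_cases h : v j = 0
    · simp [h]
    · simpa [h] using he j
  have hew : ∀ j, v j = 0 → e j * w j = |w j| := fun j h => by simpa [h] using he j
  refine ⟨fun j => β (π.symm j) * e j,
    ⟨slopeDualNorm_signed_perm (by omega) hβmono hβpos e he1 π, v, ?_, ?_⟩, ?_⟩
  · rwa [hdec, sub_add_cancel_left, slopeNorm_neg hβmono]
  · rw [iprod_signed_perm, slopeNorm_eq_of_antitone hβmono v π hπv]
    simp only [hev]
  · have htail : ∑ i ∈ Finset.univ.filter (fun i : Fin d => ¬(i : ℕ) < s), β i * sharpOrd w i ≤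
        ∑ i ∈ Finset.univ.filter (fun i : Fin d => ¬(i : ℕ) < s), β i * (e (π i) * w (π i)) := by
      refine Finset.sum_le_sum fun i hi => mul_le_mul_of_nonneg_left ?_ (hβpos i).le
      have hvi : v (π i) = 0 := apply_perm_eq_zero_of_card_le v J hJ π hπv i
        (hJs.trans (not_lt.1 (Finset.mem_filter.1 hi).2))
      rw [hew _ hvi]
      exact sharpOrd_le_of_tail_le w π i fun m him => hπw i m him hvi
    have hhead : -∑ i ∈ Finset.univ.filter (fun i : Fin d => (i : ℕ) < s), β i * |w (π i)| ≤
        ∑ i ∈ Finset.univ.filter (fun i : Fin d => (i : ℕ) < s), β i * (e (π i) * w (π i)) := by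
      rw [← Finset.sum_neg_distrib]
      refine Finset.sum_le_sum fun i _ => ?_
      rw [← mul_neg]
      refine mul_le_mul_of_nonneg_left ?_ (hβpos i).le
      simpa [abs_mul, he1] using neg_abs_le (e (π i) * w (π i))
    have hsmall : ∑ i ∈ Finset.univ.filter (fun i : Fin d => (i : ℕ) < s), β i * sharpOrd w i ≤ Bs * r := by
      rw [hBs, Finset.sum_mul]
      refine Finset.sum_le_sum fun i _ => ?_
      rw [div_mul_eq_mul_div, mul_div_assoc]
      refine mul_le_mul_of_nonneg_left ((sharpOrd_le_div_sqrt w i).trans ?_) (hβpos i).le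
      gcongr
    have hperm := sum_filter_mul_abs_perm_le hβmono hβpos s w π
    have hρr : 40 * Bs * r ≤ ρ := (le_div_iff₀ hr).1 hratio
    rw [slopeNorm, ← Finset.sum_filter_add_sum_filter_not Finset.univ
      fun i : Fin d => (i : ℕ) < s] at hw
    rw [iprod_signed_perm, ← Finset.sum_filter_add_sum_filter_not Finset.univ
      fun i : Fin d => (i : ℕ) < s]
    linarith
end

section
/- Let g₁, …, g_d be independent standard Gaussian random variables and let (g_i^♯)_{i=1}^d be the nonincreasing rearrangement of (|g_i|)_{i=1}^d. Then for every i ∈ {1, …, d} and every t ≥ 3, Pr( g_i^♯ ≥ t·√(log(ed/i)) ) ≤ exp( −(t²/4)·i·log(ed/i) ). Moreover, there is an absolute constant c > 0 such that E (g_i^♯)² ≤ c·log(ed/i) for every i ∈ {1, …, d}. -/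
open MeasureTheory ProbabilityTheory

/-- At least `i + 1` coordinates dominate the `i`-th entry (counted from `0`) of the
nonincreasing rearrangement. -/
lemma exists_card_eq_sharpOrd_le {d : ℕ} (t : Fin d → ℝ) (i : Fin d) :
    ∃ S : Finset (Fin d), S.card = (i : ℕ) + 1 ∧ ∀ j ∈ S, sharpOrd t i ≤ |t j| := by
  refine ⟨(Finset.Ici i.rev).map (Tuple.sort fun j => |t j|).toEmbedding, ?_, ?_⟩
  · rw [Finset.card_map, Fin.card_Ici, Fin.val_rev]
    have := i.isLt
    omega
  · intro j hj
    obtain ⟨m, hm, rfl⟩ := Finset.mem_map.1 hj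
    exact Tuple.monotone_sort (fun j => |t j|) (Finset.mem_Ici.1 hm)

lemma sharpOrd_nonneg {d : ℕ} (t : Fin d → ℝ) (i : Fin d) : 0 ≤ sharpOrd t i :=
  abs_nonneg _

/-- The two-sided Chernoff bound for a standard Gaussian. -/
lemma gaussianReal_abs_ge_le {s : ℝ} (hs : 0 ≤ s) :
    gaussianReal 0 1 {x | s ≤ |x|} ≤ ENNReal.ofReal (2 * Real.exp (-s ^ 2 / 2)) := by
  have hint : ∀ a : ℝ, Integrable (fun x => Real.exp (a * id x)) (gaussianReal 0 1) :=
    fun a => integrable_exp_mul_gaussianReal a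
  have hpos := measure_ge_le_exp_mul_mgf s hs (hint s)
  have hneg := measure_le_le_exp_mul_mgf (-s) (neg_nonpos.2 hs) (hint (-s))
  rw [mgf_id_gaussianReal, ← Real.exp_add] at hpos hneg
  have hsub : {x : ℝ | s ≤ |x|} ⊆ {x | s ≤ id x} ∪ {x | id x ≤ -s} := by
    intro x hx
    rcases le_abs.1 (show s ≤ |x| from hx) with h | h
    · exact Or.inl h
    · exact Or.inr (by simpa using le_neg_of_le_neg h)
  rw [← ofReal_measureReal]
  refine ENNReal.ofReal_le_ofReal ((measureReal_mono hsub).trans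
    ((measureReal_union_le _ _).trans ((add_le_add hpos hneg).trans_eq ?_)))
  rw [two_mul]
  congr 2 <;> · simp only [NNReal.coe_one]; ring

lemma integrable_exp_sq_div_four_gaussianReal :
    Integrable (fun x => Real.exp (x ^ 2 / 4)) (gaussianReal 0 1) := by
  rw [gaussianReal_of_var_ne_zero 0 one_ne_zero,
    integrable_withDensity_iff (measurable_gaussianPDF 0 1)
      (Filter.Eventually.of_forall fun _ => ENNReal.ofReal_lt_top)]
  refine ((integrable_exp_neg_mul_sq (by norm_num : (0 : ℝ) < 1 / 4)).const_mul
    (√(2 * Real.pi))⁻¹).congr (Filter.Eventually.of_forall fun x => ?_)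
  simp only [toReal_gaussianPDF, gaussianPDFReal, NNReal.coe_one, mul_one, sub_zero]
  rw [mul_left_comm, ← Real.exp_add]
  ring_nf

lemma choose_le_exp_one_mul_div_pow (n : ℕ) {k : ℕ} (hk : 0 < k) :
    (n.choose k : ℝ) ≤ (Real.exp 1 * n / k) ^ k := by
  have hk' : (0 : ℝ) < k := Nat.cast_pos.2 hk
  have hfac : (k : ℝ) ^ k / k.factorial ≤ Real.exp 1 ^ k := by
    rw [← Real.exp_nat_mul, mul_one]
    exact Real.pow_div_factorial_le_exp _ hk'.le _
  calc (n.choose k : ℝ) ≤ (n : ℝ) ^ k / k.factorial := Nat.choose_le_pow_div k n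
    _ = ((k : ℝ) ^ k / k.factorial) * (n / k) ^ k := by
        rw [div_pow]; field_simp
    _ ≤ Real.exp 1 ^ k * (n / k) ^ k := by gcongr
    _ = (Real.exp 1 * n / k) ^ k := by rw [← mul_pow, mul_div_assoc]

lemma pi_forall_mem_eq_pow {d : ℕ} (μ : Measure ℝ) [IsProbabilityMeasure μ]
    (S : Finset (Fin d)) (A : Set ℝ) :
    Measure.pi (fun _ : Fin d => μ) {x | ∀ j ∈ S, x j ∈ A} = μ A ^ S.card := by
  have hset : {x : Fin d → ℝ | ∀ j ∈ S, x j ∈ A} =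
      Set.univ.pi fun j => if j ∈ S then A else Set.univ := by
    ext x
    simp only [Set.mem_ofPred_eq, Set.mem_univ_pi]
    refine forall_congr' fun j => ?_
    by_cases h : j ∈ S <;> simp [h]
  rw [hset, Measure.pi_pi]
  simp [apply_ite μ]

/-- Union bound for the order statistics of an i.i.d. vector. -/
lemma pi_le_sharpOrd_le {d : ℕ} (μ : Measure ℝ) [IsProbabilityMeasure μ] (i : Fin d) (s : ℝ) :
    Measure.pi (fun _ : Fin d => μ) {x | s ≤ sharpOrd x i} ≤
      d.choose ((i : ℕ) + 1) * μ {x | s ≤ |x|} ^ ((i : ℕ) + 1) := by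
  have hsub : {x : Fin d → ℝ | s ≤ sharpOrd x i} ⊆
      ⋃ S ∈ Finset.powersetCard ((i : ℕ) + 1) (Finset.univ : Finset (Fin d)),
        {x | ∀ j ∈ S, x j ∈ {y : ℝ | s ≤ |y|}} := by
    intro x hx
    obtain ⟨S, hS, hle⟩ := exists_card_eq_sharpOrd_le x i
    exact Set.mem_biUnion (Finset.mem_powersetCard.2 ⟨Finset.subset_univ S, hS⟩)
      fun j hj => le_trans hx (hle j hj)
  refine (measure_mono hsub).trans ((measure_biUnion_finset_le _ _).trans_eq ?_)
  rw [Finset.sum_congr rfl fun S hS => by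
    rw [pi_forall_mem_eq_pow, (Finset.mem_powersetCard.1 hS).2]]
  simp

lemma one_le_log_exp_one_mul_div {d : ℕ} (i : Fin d) :
    1 ≤ Real.log (Real.exp 1 * (d : ℝ) / ((i : ℕ) + 1)) := by
  have hi : ((i : ℕ) : ℝ) + 1 ≤ d := by exact_mod_cast i.isLt
  have hpos : (0 : ℝ) < ((i : ℕ) : ℝ) + 1 := by positivity
  rw [Real.le_log_iff_exp_le (by have := hpos.trans_le hi; positivity), mul_div_assoc]
  exact le_mul_of_one_le_right (Real.exp_pos 1).le ((one_le_div hpos).2 hi)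

lemma pi_gaussianReal_le_sharpOrd_le {d : ℕ} (i : Fin d) {t : ℝ} (ht : 3 ≤ t) :
    Measure.pi (fun _ : Fin d => gaussianReal 0 1)
        {x | t * √(Real.log (Real.exp 1 * (d : ℝ) / ((i : ℕ) + 1))) ≤ sharpOrd x i} ≤
      ENNReal.ofReal (Real.exp (-(t ^ 2 / 4) * ((i : ℕ) + 1) *
        Real.log (Real.exp 1 * (d : ℝ) / ((i : ℕ) + 1)))) := by
  have hL := one_le_log_exp_one_mul_div i
  have hd : (0 : ℝ) < d := by exact_mod_cast i.pos
  have hchoose := choose_le_exp_one_mul_div_pow d (Nat.succ_pos (i : ℕ))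
  have hq : (0 : ℝ) < Real.exp 1 * d / ((i : ℕ) + 1) := by positivity
  push_cast [Nat.succ_eq_add_one] at hchoose
  rw [← Real.exp_log hq, ← Real.exp_nat_mul] at hchoose
  set L := Real.log (Real.exp 1 * (d : ℝ) / ((i : ℕ) + 1))
  have hs : 0 ≤ t * √L := by positivity
  have hsq : (t * √L) ^ 2 = t ^ 2 * L := by rw [mul_pow, Real.sq_sqrt (by linarith)]
  refine (pi_le_sharpOrd_le _ i _).trans
    ((mul_le_mul_right (pow_le_pow_left' (gaussianReal_abs_ge_le hs) _) _).trans ?_)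
  rw [← ENNReal.ofReal_pow (by positivity), ← ENNReal.ofReal_natCast,
    ← ENNReal.ofReal_mul (by positivity), hsq]
  refine ENNReal.ofReal_le_ofReal ?_
  have htwo : (2 : ℝ) ≤ Real.exp 1 := by linarith [Real.add_one_le_exp (1 : ℝ)]
  calc (d.choose ((i : ℕ) + 1) : ℝ) * (2 * Real.exp (-(t ^ 2 * L) / 2)) ^ ((i : ℕ) + 1)
      ≤ Real.exp (((i : ℕ) + 1 : ℕ) * L) *
          (Real.exp 1 * Real.exp (-(t ^ 2 * L) / 2)) ^ ((i : ℕ) + 1) := by gcongr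
    _ = Real.exp (((i : ℕ) + 1) * (L + 1 - t ^ 2 * L / 2)) := by
        rw [← Real.exp_add, ← Real.exp_nat_mul, ← Real.exp_add]
        push_cast
        ring_nf
    _ ≤ _ := by
        rw [Real.exp_le_exp, show -(t ^ 2 / 4) * ((i : ℕ) + 1) * L =
          ((i : ℕ) + 1) * (-(t ^ 2 / 4) * L) by ring]
        gcongr
        nlinarith [mul_le_mul_of_nonneg_right (show (9 : ℝ) ≤ t ^ 2 by nlinarith)
          (show 0 ≤ L by linarith)]

/-- Pointwise control of the square of an order statistic by exponential moments, obtained from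
`y ≤ L + exp (y - L)`. -/
lemma sharpOrd_sq_le {d : ℕ} (x : Fin d → ℝ) (i : Fin d) :
    sharpOrd x i ^ 2 ≤ 4 * (Real.log (Real.exp 1 * (d : ℝ) / ((i : ℕ) + 1)) +
      (d : ℝ)⁻¹ * ∑ j, Real.exp (x j ^ 2 / 4)) := by
  have hd : (0 : ℝ) < d := by exact_mod_cast i.pos
  have hq : (0 : ℝ) < Real.exp 1 * d / ((i : ℕ) + 1) := by positivity
  have hexp := Real.exp_log hq
  set L := Real.log (Real.exp 1 * (d : ℝ) / ((i : ℕ) + 1))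
  obtain ⟨S, hS, hle⟩ := exists_card_eq_sharpOrd_le x i
  have hsum : (((i : ℕ) : ℝ) + 1) * Real.exp (sharpOrd x i ^ 2 / 4) ≤
      ∑ j, Real.exp (x j ^ 2 / 4) := by
    calc (((i : ℕ) : ℝ) + 1) * Real.exp (sharpOrd x i ^ 2 / 4)
        = ∑ j ∈ S, Real.exp (sharpOrd x i ^ 2 / 4) := by simp [hS]
      _ ≤ ∑ j ∈ S, Real.exp (x j ^ 2 / 4) := by
          refine Finset.sum_le_sum fun j hj => Real.exp_le_exp.2 ?_
          rw [← sq_abs (x j)]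
          have := pow_le_pow_left₀ (sharpOrd_nonneg x i) (hle j hj) 2
          linarith
      _ ≤ _ := Finset.sum_le_sum_of_subset_of_nonneg (Finset.subset_univ S)
          fun _ _ _ => (Real.exp_pos _).le
  have hexp_sub : Real.exp (sharpOrd x i ^ 2 / 4 - L) ≤
      (d : ℝ)⁻¹ * ∑ j, Real.exp (x j ^ 2 / 4) := by
    calc Real.exp (sharpOrd x i ^ 2 / 4 - L)
        = (Real.exp 1)⁻¹ * ((d : ℝ)⁻¹ *
            ((((i : ℕ) : ℝ) + 1) * Real.exp (sharpOrd x i ^ 2 / 4))) := by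
          rw [Real.exp_sub, hexp]
          field_simp
      _ ≤ 1 * ((d : ℝ)⁻¹ * ∑ j, Real.exp (x j ^ 2 / 4)) := by
          gcongr
          exact inv_le_one_of_one_le₀ (Real.one_le_exp zero_le_one)
      _ = _ := one_mul _
  linarith [Real.add_one_le_exp (sharpOrd x i ^ 2 / 4 - L)]

/-- order statistics of i.i.d. standard Gaussians: for `g₁, …, g_d` i.i.d.
standard Gaussian, the `i`-th largest absolute value `g_i^♯` satisfies the tail bound
`Pr(g_i^♯ ≥ t√(log(ed/i))) ≤ exp(-(t²/4) i log(ed/i))` for `t ≥ 3`, and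
`𝔼(g_i^♯)² ≤ c log(ed/i)` for an absolute constant `c`. (The `1`-based index `i`
corresponds to `(i : ℕ) + 1` for `i : Fin d`.) -/
theorem stmt14 : ∃ c : ℝ, 0 < c ∧
    ∀ (d : ℕ) (Ω : Type) [MeasurableSpace Ω] (P : Measure Ω) [IsProbabilityMeasure P],
    ∀ g : Ω → Fin d → ℝ, Measurable g →
    P.map g = Measure.pi (fun _ : Fin d => gaussianReal 0 1) →
    (∀ i : Fin d, ∀ t : ℝ, 3 ≤ t →
      P {ω | t * Real.sqrt (Real.log (Real.exp 1 * (d : ℝ) / ((i : ℕ) + 1))) ≤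
          sharpOrd (g ω) i} ≤
        ENNReal.ofReal (Real.exp (-(t ^ 2 / 4) * ((i : ℕ) + 1) *
          Real.log (Real.exp 1 * (d : ℝ) / ((i : ℕ) + 1))))) ∧
    (∀ i : Fin d,
      ∫ ω, (sharpOrd (g ω) i) ^ 2 ∂P ≤
        c * Real.log (Real.exp 1 * (d : ℝ) / ((i : ℕ) + 1))) := by
  refine ⟨4 * (1 + ∫ x, Real.exp (x ^ 2 / 4) ∂gaussianReal 0 1), ?_, ?_⟩
  · have : 0 ≤ ∫ x, Real.exp (x ^ 2 / 4) ∂gaussianReal 0 1 :=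
      integral_nonneg fun x => (Real.exp_pos _).le
    positivity
  intro d Ω _ P _ g hg hmap
  refine ⟨fun i t ht => ?_, fun i => ?_⟩
  · have htail := pi_gaussianReal_le_sharpOrd_le i ht
    rw [← hmap] at htail
    exact (Measure.le_map_apply hg.aemeasurable _).trans htail
  · have hcoord : ∀ j, MeasurePreserving (fun ω => g ω j) P (gaussianReal 0 1) := fun j =>
      (measurePreserving_eval (fun _ : Fin d => gaussianReal 0 1) j).comp ⟨hg, hmap⟩
    have hint : ∀ j, Integrable (fun ω => Real.exp (g ω j ^ 2 / 4)) P := fun j =>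
      (hcoord j).integrable_comp_of_integrable integrable_exp_sq_div_four_gaussianReal
    have hval : ∀ j, ∫ ω, Real.exp (g ω j ^ 2 / 4) ∂P =
        ∫ x, Real.exp (x ^ 2 / 4) ∂gaussianReal 0 1 := fun j => by
      rw [← (hcoord j).map_eq, integral_map (hcoord j).aemeasurable (by fun_prop)]
    have hsum : Integrable (fun ω => (d : ℝ)⁻¹ * ∑ j, Real.exp (g ω j ^ 2 / 4)) P :=
      (integrable_finsetSum _ fun j _ => hint j).const_mul _
    have hd : (d : ℝ) ≠ 0 := by exact_mod_cast i.pos.ne'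
    have hL := one_le_log_exp_one_mul_div i
    have hC : 0 ≤ ∫ x, Real.exp (x ^ 2 / 4) ∂gaussianReal 0 1 :=
      integral_nonneg fun x => (Real.exp_pos _).le
    refine (integral_mono_of_nonneg (Filter.Eventually.of_forall fun ω => sq_nonneg _)
      (((integrable_const _).add hsum).const_mul 4)
      (Filter.Eventually.of_forall fun ω => sharpOrd_sq_le (g ω) i)).trans ?_
    simp only [Pi.add_apply]
    rw [integral_const_mul, integral_add (integrable_const _) hsum, integral_const_mul,
      integral_finsetSum _ fun j _ => hint j, Finset.sum_congr rfl fun j _ => hval j]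
    simp only [integral_const, probReal_univ, one_smul, Finset.sum_const, Finset.card_univ,
      Fintype.card_fin, nsmul_eq_mul, inv_mul_cancel_left₀ hd]
    nlinarith
end

section
/- There exists an absolute constant C > 0 such that for every d ≥ 1 and all ρ, r > 0 with r ≤ ρ ≤ r√d, the Gaussian mean width of ρB₁^d ∩ rB₂^d satisfies E sup{ ⟨G, w⟩ : ‖w‖₁ ≤ ρ, ‖w‖₂ ≤ r } ≤ C·ρ·√(log(e d r²/ρ²)), where G is a standard Gaussian vector in ℝ^d. -/
open MeasureTheory ProbabilityTheory

/-- A pointwise soft-thresholding bound at level `t`. -/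
lemma mul_le_threshold_add_exp {t a : ℝ} (ht : 0 < t) (ha : 0 < a) (x w : ℝ) :
    x * w ≤ t * |w| + a / 2 * w ^ 2 +
      1 / (a * t ^ 2) * Real.exp (-t ^ 2) * (Real.exp (t * x) + Real.exp (-t * x)) := by
  have hxw : x * w ≤ |x| * |w| := by rw [← abs_mul]; exact le_abs_self _
  have hw : 0 ≤ |w| := abs_nonneg w
  have hrem : 0 ≤ 1 / (a * t ^ 2) * Real.exp (-t ^ 2) *
      (Real.exp (t * x) + Real.exp (-t * x)) := by positivity
  rcases le_total |x| t with h | h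
  · nlinarith [mul_le_mul_of_nonneg_right h hw, mul_nonneg ha.le (sq_nonneg w)]
  · have hb : 0 ≤ t * (|x| - t) := mul_nonneg ht.le (sub_nonneg.2 h)
    have hquad : (t * (|x| - t)) ^ 2 / 2 ≤ Real.exp (t * (|x| - t)) := by
      linarith [Real.quadratic_le_exp_of_nonneg hb]
    have hexp : Real.exp (t * (|x| - t)) ≤
        Real.exp (-t ^ 2) * (Real.exp (t * x) + Real.exp (-t * x)) := by
      have hsplit : t * (|x| - t) = -t ^ 2 + t * |x| := by ring
      rw [hsplit, Real.exp_add]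
      refine mul_le_mul_of_nonneg_left ?_ (Real.exp_pos _).le
      rcases abs_cases x with ⟨hx, -⟩ | ⟨hx, -⟩ <;> rw [hx]
      · linarith [Real.exp_pos (-t * x)]
      · rw [mul_neg, ← neg_mul]
        linarith [Real.exp_pos (t * x)]
    have hsq : (|x| - t) ^ 2 / (2 * a) ≤ 1 / (a * t ^ 2) * Real.exp (-t ^ 2) *
        (Real.exp (t * x) + Real.exp (-t * x)) := by
      have hscale : (|x| - t) ^ 2 / (2 * a) =
          1 / (a * t ^ 2) * ((t * (|x| - t)) ^ 2 / 2) := by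
        field_simp
      rw [hscale, mul_assoc]
      exact mul_le_mul_of_nonneg_left (hquad.trans hexp) (by positivity)
    have hyoung : |w| * (|x| - t) ≤ a / 2 * w ^ 2 + (|x| - t) ^ 2 / (2 * a) := by
      have hdiff : a / 2 * w ^ 2 + (|x| - t) ^ 2 / (2 * a) - |w| * (|x| - t) =
          (a * |w| - (|x| - t)) ^ 2 / (2 * a) := by
        rw [← sq_abs w]
        field_simp
        ring
      have : 0 ≤ (a * |w| - (|x| - t)) ^ 2 / (2 * a) := by positivity
      linarith
    nlinarith

/-- The support function of `ρB₁ ∩ rB₂` is bounded by a sum of exponentials of the coordinates. -/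
lemma iprod_le_of_l1norm_le_of_l2norm_le {d : ℕ} {ρ r t : ℝ} (hr : 0 < r) (hρ : 0 < ρ)
    (ht : 0 < t) (x w : Fin d → ℝ) (hw₁ : l1norm w ≤ ρ) (hw₂ : l2norm w ≤ r) :
    iprod x w ≤ t * ρ + ρ / 2 + ∑ i, r ^ 2 / (ρ * t ^ 2) * Real.exp (-t ^ 2) *
      (Real.exp (t * x i) + Real.exp (-t * x i)) := by
  have ha : 0 < ρ / r ^ 2 := by positivity
  have hsum := Finset.sum_le_sum fun i (_ : i ∈ Finset.univ) =>
    mul_le_threshold_add_exp ht ha (x i) (w i)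
  rw [Finset.sum_add_distrib, Finset.sum_add_distrib, ← Finset.mul_sum, ← Finset.mul_sum] at hsum
  have hsq : ∑ i, w i ^ 2 ≤ r ^ 2 := (Real.sqrt_le_left hr.le).1 hw₂
  have h₁ : t * ∑ i, |w i| ≤ t * ρ := mul_le_mul_of_nonneg_left hw₁ ht.le
  have h₂ : ρ / r ^ 2 / 2 * ∑ i, w i ^ 2 ≤ ρ / 2 := by
    calc ρ / r ^ 2 / 2 * ∑ i, w i ^ 2 ≤ ρ / r ^ 2 / 2 * r ^ 2 :=
          mul_le_mul_of_nonneg_left hsq (by positivity)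
      _ = ρ / 2 := by field_simp
  have hcoef : 1 / (ρ / r ^ 2 * t ^ 2) = r ^ 2 / (ρ * t ^ 2) := by field_simp
  rw [hcoef] at hsum
  unfold iprod
  linarith

lemma integral_exp_mul_of_map_eq_gaussianReal {Ω : Type*} [MeasurableSpace Ω] {P : Measure Ω}
    {X : Ω → ℝ} (hX : P.map X = gaussianReal 0 1) (s : ℝ) :
    Integrable (fun ω => Real.exp (s * X ω)) P ∧
      ∫ ω, Real.exp (s * X ω) ∂P = Real.exp (s ^ 2 / 2) := by
  have hmgf : ∫ ω, Real.exp (s * X ω) ∂P = Real.exp (s ^ 2 / 2) := by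
    have := mgf_gaussianReal hX s
    simpa [mgf] using this
  refine ⟨?_, hmgf⟩
  by_contra h
  rw [integral_undef h] at hmgf
  exact (Real.exp_pos _).ne hmgf

/-- there is an absolute constant `C > 0` such that for all `d ≥ 1` and
`r ≤ ρ ≤ r√d`, the Gaussian mean width of `ρB₁^d ∩ rB₂^d` is at most
`Cρ√(log(edr²/ρ²))`. -/
theorem stmt18 : ∃ C : ℝ, 0 < C ∧
    ∀ (d : ℕ), 1 ≤ d →
    ∀ ρ r : ℝ, 0 < r → r ≤ ρ → ρ ≤ r * Real.sqrt d →
    ∀ (Ω : Type) [MeasurableSpace Ω] (P : Measure Ω) [IsProbabilityMeasure P],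
    ∀ G : Ω → Fin d → ℝ, Measurable G →
    P.map G = Measure.pi (fun _ : Fin d => gaussianReal 0 1) →
    (∫ ω, sSup ((fun w => iprod (G ω) w) ''
        {w : Fin d → ℝ | l1norm w ≤ ρ ∧ l2norm w ≤ r}) ∂P) ≤
      C * ρ * Real.sqrt (Real.log (Real.exp 1 * (d : ℝ) * r ^ 2 / ρ ^ 2)) := by
  refine ⟨4, by norm_num, ?_⟩
  intro d hd ρ r hr hrρ hρd Ω _ P _ G hG hmap
  have hρ : 0 < ρ := hr.trans_le hrρ
  have hd' : (0 : ℝ) < d := by exact_mod_cast hd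
  set L := Real.log (Real.exp 1 * (d : ℝ) * r ^ 2 / ρ ^ 2) with hL
  have hratio : ρ ^ 2 ≤ d * r ^ 2 := by
    calc ρ ^ 2 ≤ (r * Real.sqrt d) ^ 2 := pow_le_pow_left₀ hρ.le hρd 2
      _ = d * r ^ 2 := by rw [mul_pow, Real.sq_sqrt hd'.le]; ring
  have hL1 : 1 ≤ L := by
    rw [hL, Real.le_log_iff_exp_le (by positivity), le_div_iff₀ (by positivity), mul_assoc]
    exact mul_le_mul_of_nonneg_left hratio (Real.exp_pos _).le
  have hexpL : Real.exp L = Real.exp 1 * (d : ℝ) * r ^ 2 / ρ ^ 2 :=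
    Real.exp_log (by positivity)
  set t := Real.sqrt (2 * L) with ht_def
  have ht : 0 < t := Real.sqrt_pos.2 (by linarith)
  have ht2 : t ^ 2 = 2 * L := Real.sq_sqrt (by linarith)
  have hcoord (i : Fin d) : P.map (fun ω => G ω i) = gaussianReal 0 1 := by
    have heval := (measurePreserving_eval (fun _ : Fin d => gaussianReal 0 1) i).map_eq
    rw [← heval, ← hmap, Measure.map_map (measurable_pi_apply i) hG]
    rfl
  have hterm (i : Fin d) :
      Integrable (fun ω => Real.exp (t * G ω i) + Real.exp (-t * G ω i)) P :=
    (integral_exp_mul_of_map_eq_gaussianReal (hcoord i) t).1.add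
    (integral_exp_mul_of_map_eq_gaussianReal (hcoord i) (-t)).1
  set c := r ^ 2 / (ρ * t ^ 2) * Real.exp (-t ^ 2) with hc
  have hint : Integrable (fun ω => ∑ i, c * (Real.exp (t * G ω i) + Real.exp (-t * G ω i))) P :=
    integrable_finsetSum _ fun i _ => (hterm i).const_mul c
  have hpt (ω : Ω) : ∀ y ∈ (fun w => iprod (G ω) w) ''
      {w : Fin d → ℝ | l1norm w ≤ ρ ∧ l2norm w ≤ r},
      y ≤ t * ρ + ρ / 2 + ∑ i, c * (Real.exp (t * G ω i) + Real.exp (-t * G ω i)) := by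
    rintro _ ⟨w, ⟨hw₁, hw₂⟩, rfl⟩
    exact iprod_le_of_l1norm_le_of_l2norm_le hr hρ ht (G ω) w hw₁ hw₂
  have hzero (ω : Ω) : (0 : ℝ) ∈ (fun w => iprod (G ω) w) ''
      {w : Fin d → ℝ | l1norm w ≤ ρ ∧ l2norm w ≤ r} :=
    ⟨0, ⟨by simpa [l1norm] using hρ.le, by simpa [l2norm] using hr.le⟩, by simp [iprod]⟩
  have hmono := integral_mono_of_nonneg (μ := P)
    (ae_of_all _ fun ω => le_csSup ⟨_, hpt ω⟩ (hzero ω))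
    ((integrable_const (t * ρ + ρ / 2)).add hint)
    (ae_of_all _ fun ω => csSup_le ⟨0, hzero ω⟩ (hpt ω))
  refine hmono.trans ?_
  have hval : ∫ ω, ∑ i, c * (Real.exp (t * G ω i) + Real.exp (-t * G ω i)) ∂P =
      d * (c * (2 * Real.exp (t ^ 2 / 2))) := by
    rw [integral_finsetSum _ fun i _ => (hterm i).const_mul c]
    have hone (i : Fin d) : ∫ ω, c * (Real.exp (t * G ω i) + Real.exp (-t * G ω i)) ∂P =
        c * (2 * Real.exp (t ^ 2 / 2)) := by
      have hp := integral_exp_mul_of_map_eq_gaussianReal (hcoord i) t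
      have hn := integral_exp_mul_of_map_eq_gaussianReal (hcoord i) (-t)
      rw [integral_const_mul, integral_add hp.1 hn.1, hp.2, hn.2, neg_sq, two_mul]
    rw [Finset.sum_congr rfl fun i _ => hone i]
    simp
  have htail : d * (c * (2 * Real.exp (t ^ 2 / 2))) ≤ ρ := by
    have hsplit : Real.exp (-t ^ 2) * Real.exp (t ^ 2 / 2) = (Real.exp L)⁻¹ := by
      rw [← Real.exp_add, ← Real.exp_neg, ht2]
      congr 1
      ring
    have heq : d * (c * (2 * Real.exp (t ^ 2 / 2))) = ρ / (L * Real.exp 1) := by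
      calc d * (c * (2 * Real.exp (t ^ 2 / 2)))
          = d * (r ^ 2 / (ρ * t ^ 2)) * 2 * (Real.exp (-t ^ 2) * Real.exp (t ^ 2 / 2)) := by
            rw [hc]; ring
        _ = ρ / (L * Real.exp 1) := by
            rw [hsplit, hexpL, ht2]
            field_simp
    rw [heq]
    exact div_le_self hρ.le (one_le_mul_of_one_le_of_one_le hL1 (Real.one_le_exp zero_le_one))
  have hsqrt : 1 ≤ Real.sqrt L := Real.one_le_sqrt.2 hL1
  have ht_le : t ≤ 2 * Real.sqrt L := by
    rw [ht_def]
    refine Real.sqrt_le_iff.2 ⟨by positivity, ?_⟩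
    rw [mul_pow, Real.sq_sqrt (by linarith)]
    linarith
  have hadd : ∫ ω, ((fun _ : Ω => t * ρ + ρ / 2) + fun ω => ∑ i, c *
      (Real.exp (t * G ω i) + Real.exp (-t * G ω i)) : Ω → ℝ) ω ∂P =
      t * ρ + ρ / 2 + d * (c * (2 * Real.exp (t ^ 2 / 2))) := by
    rw [integral_add' (integrable_const _) hint, hval]
    simp
  rw [hadd]
  nlinarith [mul_le_mul_of_nonneg_right ht_le hρ.le, mul_le_mul_of_nonneg_right hsqrt hρ.le]
end
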